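/- Finite model property of S4DT1S: for every bimodal formula A, A ∈ S4DT1S if and only if F ⊨ A for every finite S4D-frame F that is both a DS-frame and a T₁-frame. -/

import Mathlib

/-- Bimodal formulas: propositional letters, falsum, implication, box, and
the difference modality `[≠]` (called `dbox` here). -/
inductive BForm : Type
  | var : ℕ → BForm
  | bot : BForm
  | imp : BForm → BForm → BForm
  | box : BForm → BForm
  | dbox : BForm → BForm
  deriving DecidableEq

namespace BForm

/-- Classical negation. -/
def neg (A : BForm) : BForm := imp A bot

/-- Classical conjunction. -/
def conj (A B : BForm) : BForm := neg (imp A (neg B))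

/-- `◇A = ¬□¬A`. -/
def dia (A : BForm) : BForm := neg (box (neg A))

/-- `⟨≠⟩A = ¬[≠]¬A`. -/
def ddia (A : BForm) : BForm := neg (dbox (neg A))

end BForm

/-- Truth at a point of a Kripke model over a frame `(W, R, R_D)`. -/
def ksat {W : Type} (R RD : W → W → Prop) (θ : ℕ → Set W) : W → BForm → Prop
  | x, .var n => x ∈ θ n
  | _, .bot => False
  | x, .imp A B => ksat R RD θ x A → ksat R RD θ x B
  | x, .box A => ∀ y, R x y → ksat R RD θ y A
  | x, .dbox A => ∀ y, RD x y → ksat R RD θ y A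

/-- Validity in a Kripke frame: truth at every point under every valuation. -/
def kvalid {W : Type} (R RD : W → W → Prop) (A : BForm) : Prop :=
  ∀ (θ : ℕ → Set W) (x : W), ksat R RD θ x A

/-- Truth at a point of a topological model. -/
def tsat {X : Type} [TopologicalSpace X] (θ : ℕ → Set X) : X → BForm → Prop
  | x, .var n => x ∈ θ n
  | _, .bot => False
  | x, .imp A B => tsat θ x A → tsat θ x B
  | x, .box A => ∃ U : Set X, IsOpen U ∧ x ∈ U ∧ ∀ y ∈ U, tsat θ y A
  | x, .dbox A => ∀ y, y ≠ x → tsat θ y A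

/-- Validity in a topological space. -/
def tvalid (X : Type) [TopologicalSpace X] (A : BForm) : Prop :=
  ∀ (θ : ℕ → Set X) (x : X), tsat θ x A

/-- Uniform substitution of formulas for propositional letters. -/
def substF (σ : ℕ → BForm) : BForm → BForm
  | .var n => σ n
  | .bot => .bot
  | .imp A B => .imp (substF σ A) (substF σ B)
  | .box A => .box (substF σ A)
  | .dbox A => .dbox (substF σ A)

/-- Boolean evaluation of a formula, treating letters and modal formulas as atoms. -/
def beval (v : BForm → Bool) : BForm → Bool
  | .var n => v (.var n)
  | .bot => false
  | .imp A B => !(beval v A) || beval v B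
  | .box A => v (.box A)
  | .dbox A => v (.dbox A)

/-- A classical tautology of the bimodal language. -/
def Tautology (A : BForm) : Prop := ∀ v : BForm → Bool, beval v A = true

/-- The letter `p`. -/
def pLet : BForm := .var 0
/-- The letter `q`. -/
def qLet : BForm := .var 1

/-- The least bimodal logic containing `K₂`, the S4D axioms and the extra axioms `Ax`,
closed under modus ponens, uniform substitution, and both necessitation rules. -/
inductive Logic (Ax : Set BForm) : BForm → Prop
  | taut {A : BForm} : Tautology A → Logic Ax A
  | axKBox : Logic Ax (.imp (.box (.imp pLet qLet)) (.imp (.box pLet) (.box qLet)))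
  | axKD : Logic Ax (.imp (.dbox (.imp pLet qLet)) (.imp (.dbox pLet) (.dbox qLet)))
  | axBD : Logic Ax (.imp pLet (.dbox (BForm.ddia pLet)))
  | ax4mD : Logic Ax (.imp (BForm.conj pLet (.dbox pLet)) (.dbox (.dbox pLet)))
  | axTBox : Logic Ax (.imp (.box pLet) pLet)
  | ax4Box : Logic Ax (.imp (.box pLet) (.box (.box pLet)))
  | axDBox : Logic Ax (.imp (BForm.conj (.dbox pLet) pLet) (.box pLet))
  | extra {A : BForm} : A ∈ Ax → Logic Ax A
  | mp {A B : BForm} : Logic Ax (.imp A B) → Logic Ax A → Logic Ax B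
  | subst {A : BForm} (σ : ℕ → BForm) : Logic Ax A → Logic Ax (substF σ A)
  | necBox {A : BForm} : Logic Ax A → Logic Ax (.box A)
  | necD {A : BForm} : Logic Ax A → Logic Ax (.dbox A)

/-- The axiom (DS): `[≠]p → ◇p`. -/
def dsAx : BForm := .imp (.dbox pLet) (BForm.dia pLet)

/-- The axiom (AT₁): `[≠]p → [≠]□p`. -/
def at1Ax : BForm := .imp (.dbox pLet) (.dbox (.box pLet))

/-- The logic S4D. -/
def S4D : BForm → Prop := Logic ∅

/-- The logic S4DS = S4D + (DS). -/
def S4DS : BForm → Prop := Logic {dsAx}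

/-- The logic S4DT1S = S4DS + (AT₁). -/
def S4DT1S : BForm → Prop := Logic {dsAx, at1Ax}

/-- `(W, R, R_D)` is an S4D-frame: `R` is reflexive and transitive, `R_D` is
symmetric and pseudo-transitive, and `R ⊆ R_D ∪ Id`. -/
structure IsS4DFrame {W : Type} (R RD : W → W → Prop) : Prop where
  refl : ∀ x, R x x
  trans : ∀ ⦃x y z⦄, R x y → R y z → R x z
  symm : ∀ ⦃x y⦄, RD x y → RD y x
  ptrans : ∀ ⦃x y z⦄, RD x y → RD y z → x ≠ z → RD x z
  inc : ∀ ⦃x y⦄, R x y → RD x y ∨ x = y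

/-- A T₁-frame: every `R_D`-irreflexive point is `R`-minimal. -/
def IsT1Frame {W : Type} (R RD : W → W → Prop) : Prop :=
  ∀ x, ¬ RD x x → ∀ y, R y x → y = x

/-- A DS-frame: every `R_D`-irreflexive point has an `R`-successor distinct from itself. -/
def IsDSFrame {W : Type} (R RD : W → W → Prop) : Prop :=
  ∀ x, ¬ RD x x → ∃ y, y ≠ x ∧ R x y

/-- A cd-p-morphism from a topological space `X` onto a Kripke frame `(W, R, R_D)`. -/
structure IsCdPMorphism {X : Type} [TopologicalSpace X] {W : Type}
    (R RD : W → W → Prop) (f : X → W) : Prop where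
  surj : Function.Surjective f
  cl : ∀ w : W, closure (f ⁻¹' {w}) = f ⁻¹' {v | R v w}
  diff : ∀ w : W, {x : X | ∃ y, y ≠ x ∧ f y = w} = f ⁻¹' {v | RD v w}

/-- A p-morphism between Kripke frames. -/
structure IsPMorphism {W W' : Type} (R RD : W → W → Prop) (R' RD' : W' → W' → Prop)
    (f : W → W') : Prop where
  surj : Function.Surjective f
  forth : ∀ ⦃x y⦄, R x y → R' (f x) (f y)
  forthD : ∀ ⦃x y⦄, RD x y → RD' (f x) (f y)
  back : ∀ x z, R' (f x) z → ∃ y, R x y ∧ f y = z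
  backD : ∀ x z, RD' (f x) z → ∃ y, RD x y ∧ f y = z

/-- The Alexandrov topology on `W` whose open sets are the `R`-upward-closed sets. -/
def alexandrov {W : Type} (R : W → W → Prop) : TopologicalSpace W where
  IsOpen U := ∀ ⦃x⦄, x ∈ U → ∀ ⦃y⦄, R x y → y ∈ U
  isOpen_univ := fun _ _ _ _ => trivial
  isOpen_inter := fun _ _ hU hV x hx y hxy => ⟨hU hx.1 hxy, hV hx.2 hxy⟩
  isOpen_sUnion := fun _ hS x hx y hxy => by
    obtain ⟨U, hU, hxU⟩ := hx
    exact ⟨U, hU, hS U hU hxU hxy⟩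

/-!
All the axioms are canonical: the canonical frame of `S4DT1S` is an S4D-frame, a DS-frame and a
T₁-frame. In an S4D-frame the reflexive closure of `R_D` is an equivalence relation whose classes
are closed under `R`, so a formula refuted somewhere is refuted on a single class, where any two
distinct points are `R_D`-related.

Filter such a class through the subformulas of the formula, taking the image of `R_D` and the
transitive closure of the image of `R`. On S4D-frames the DS- and T₁-conditions are equivalent to
`∀ x, ∃ y, x R_D y ∧ x R y` and `x R_D y R z → x R_D z` respectively. The first one is inherited by
images. For the second, let `x R_D y`, let `u` be identified with `y`, and let `u R v`. If `x ≠ u`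
then `x R_D u R v`, hence `x R_D v`. If `x = u` then `x R_D v`, or `v = x` is identified with `y`.
-/

open BForm Relation

section Semantics

variable {W : Type} {R RD : W → W → Prop} {θ : ℕ → Set W} {x : W} {A B : BForm}

theorem ksat_conj : ksat R RD θ x (conj A B) ↔ ksat R RD θ x A ∧ ksat R RD θ x B := by
  simp only [conj, neg, ksat]
  tauto

theorem ksat_dia : ksat R RD θ x (dia A) ↔ ∃ y, R x y ∧ ksat R RD θ y A := by
  simp [dia, neg, ksat]

theorem ksat_ddia : ksat R RD θ x (ddia A) ↔ ∃ y, RD x y ∧ ksat R RD θ y A := by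
  simp [ddia, neg, ksat]

theorem ksat_substF (σ : ℕ → BForm) :
    ksat R RD θ x (substF σ A) ↔ ksat R RD (fun n => {y | ksat R RD θ y (σ n)}) x A := by
  induction A generalizing x with
  | var n => rfl
  | bot => rfl
  | imp A B ihA ihB => simp only [substF, ksat, ihA, ihB]
  | box A ih => simp only [substF, ksat, ih]
  | dbox A ih => simp only [substF, ksat, ih]

open Classical in
theorem beval_decide_ksat :
    beval (fun B => decide (ksat R RD θ x B)) A = true ↔ ksat R RD θ x A := by
  induction A with
  | imp A B ihA ihB =>
    simp only [beval, ksat, ← ihA, ← ihB, Bool.or_eq_true, Bool.not_eq_true', imp_iff_not_or,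
      Bool.not_eq_true]
  | bot => simp [beval, ksat]
  | _ => simp [beval]

theorem Tautology.kvalid (hA : Tautology A) : kvalid R RD A :=
  fun _ _ => beval_decide_ksat.1 (hA _)

theorem ksat_subrel {p : W → Prop} (hR : ∀ ⦃x y⦄, p x → R x y → p y)
    (hRD : ∀ ⦃x y⦄, p x → RD x y → p y) (x : Subtype p) :
    ksat (Subrel R p) (Subrel RD p) (fun n => Subtype.val ⁻¹' θ n) x A ↔ ksat R RD θ x A := by
  induction A generalizing x with
  | var n => rfl
  | bot => rfl
  | imp A B ihA ihB => simp only [ksat, ihA, ihB]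
  | box A ih =>
    simp only [ksat, ih]
    exact ⟨fun h y hxy => h ⟨y, hR x.2 hxy⟩ hxy, fun h y hxy => h y hxy⟩
  | dbox A ih =>
    simp only [ksat, ih]
    exact ⟨fun h y hxy => h ⟨y, hRD x.2 hxy⟩ hxy, fun h y hxy => h y hxy⟩

end Semantics

section Frames

variable {W : Type} {R RD : W → W → Prop}

namespace IsS4DFrame

theorem isDSFrame_iff (hF : IsS4DFrame R RD) :
    IsDSFrame R RD ↔ ∀ x, ∃ y, RD x y ∧ R x y := by
  refine ⟨fun h x => ?_, fun h x hx => ?_⟩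
  · by_cases hx : RD x x
    · exact ⟨x, hx, hF.refl x⟩
    · obtain ⟨y, hyx, hxy⟩ := h x hx
      exact ⟨y, (hF.inc hxy).resolve_right hyx.symm, hxy⟩
  · obtain ⟨y, hRD, hR⟩ := h x
    exact ⟨y, fun hyx => hx (hyx ▸ hRD), hR⟩

theorem isT1Frame_iff (hF : IsS4DFrame R RD) :
    IsT1Frame R RD ↔ ∀ ⦃x y z⦄, RD x y → R y z → RD x z := by
  refine ⟨fun h x y z hxy hyz => ?_, fun h x hx y hyx => ?_⟩
  · rcases hF.inc hyz with hyz' | rfl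
    · by_cases hxz : x = z
      · subst hxz
        by_contra hx
        exact hx (h x hx y hyz ▸ hxy)
      · exact hF.ptrans hxy hyz' hxz
    · exact hxy
  · by_contra hne
    exact hx (h (hF.symm ((hF.inc hyx).resolve_right hne)) hyx)

theorem kvalid_dsAx (hF : IsS4DFrame R RD) (hDS : IsDSFrame R RD) : kvalid R RD dsAx := by
  intro θ x h
  obtain ⟨y, hRD, hR⟩ := hF.isDSFrame_iff.1 hDS x
  exact ksat_dia.2 ⟨y, hR, h y hRD⟩

theorem kvalid_at1Ax (hF : IsS4DFrame R RD) (hT1 : IsT1Frame R RD) : kvalid R RD at1Ax :=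
  fun _ _ h _ hxy z hyz => h z (hF.isT1Frame_iff.1 hT1 hxy hyz)

theorem kvalid_of_logic (hF : IsS4DFrame R RD) {Ax : Set BForm}
    (hAx : ∀ A ∈ Ax, kvalid R RD A) {A : BForm} (hA : Logic Ax A) : kvalid R RD A := by
  induction hA with
  | taut h => exact h.kvalid
  | axKBox => exact fun θ x h₁ h₂ y hxy => h₁ y hxy (h₂ y hxy)
  | axKD => exact fun θ x h₁ h₂ y hxy => h₁ y hxy (h₂ y hxy)
  | axBD => exact fun θ x h y hxy => ksat_ddia.2 ⟨x, hF.symm hxy, h⟩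
  | ax4mD =>
    intro θ x h y hxy z hyz
    obtain ⟨hx, hRD⟩ := ksat_conj.1 h
    by_cases hxz : x = z
    · exact hxz ▸ hx
    · exact hRD z (hF.ptrans hxy hyz hxz)
  | axTBox => exact fun θ x h => h x (hF.refl x)
  | ax4Box => exact fun θ x h y hxy z hyz => h z (hF.trans hxy hyz)
  | axDBox =>
    intro θ x h y hxy
    obtain ⟨hRD, hx⟩ := ksat_conj.1 h
    rcases hF.inc hxy with hxy' | rfl
    · exact hRD y hxy'
    · exact hx
  | extra h => exact hAx _ h
  | mp _ _ ih₁ ih₂ => exact fun θ x => ih₁ θ x (ih₂ θ x)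
  | subst σ _ ih => exact fun θ x => (ksat_substF σ).2 (ih _ x)
  | necBox _ ih => exact fun θ x y _ => ih θ y
  | necD _ ih => exact fun θ x y _ => ih θ y

theorem reflGen_trans (hF : IsS4DFrame R RD) {x y z : W} (hxy : ReflGen RD x y)
    (hyz : ReflGen RD y z) : ReflGen RD x z := by
  rcases hxy with _ | hxy
  · exact hyz
  rcases hyz with _ | hyz
  · exact .single hxy
  by_cases hxz : x = z
  · exact hxz ▸ .refl
  · exact .single (hF.ptrans hxy hyz hxz)

theorem reflGen_symm (hF : IsS4DFrame R RD) {x y : W} (hxy : ReflGen RD x y) :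
    ReflGen RD y x := by
  rcases hxy with _ | hxy
  · exact .refl
  · exact .single (hF.symm hxy)

theorem reflGen_of_rel (hF : IsS4DFrame R RD) {x y : W} (hxy : R x y) : ReflGen RD x y := by
  rcases hF.inc hxy with hxy' | rfl
  · exact .single hxy'
  · exact .refl

theorem subrel (hF : IsS4DFrame R RD) (p : W → Prop) :
    IsS4DFrame (Subrel R p) (Subrel RD p) where
  refl x := hF.refl x
  trans _ _ _ hxy hyz := hF.trans hxy hyz
  symm _ _ hxy := hF.symm hxy
  ptrans _ _ _ hxy hyz hxz := hF.ptrans hxy hyz (Subtype.coe_ne_coe.2 hxz)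
  inc _ _ hxy := (hF.inc hxy).imp_right Subtype.ext

theorem pairwise_subrel_reflGen (hF : IsS4DFrame R RD) (r : W) :
    Pairwise (Subrel RD (ReflGen RD r)) := by
  intro x y hxy
  have h : ReflGen RD (x : W) y := hF.reflGen_trans (hF.reflGen_symm x.2) y.2
  exact ((reflGen_iff _ _ _).1 h).resolve_left (Subtype.coe_ne_coe.2 hxy.symm)

end IsS4DFrame

theorem IsT1Frame.subrel (hT1 : IsT1Frame R RD) (p : W → Prop) :
    IsT1Frame (Subrel R p) (Subrel RD p) :=
  fun x hx y hyx => Subtype.ext (hT1 x hx y hyx)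

theorem IsDSFrame.subrel (hDS : IsDSFrame R RD) {p : W → Prop}
    (hp : ∀ ⦃x y⦄, p x → R x y → p y) : IsDSFrame (Subrel R p) (Subrel RD p) := by
  intro x hx
  obtain ⟨y, hyx, hxy⟩ := hDS x hx
  exact ⟨⟨y, hp x.2 hxy⟩, Subtype.coe_ne_coe.1 hyx, hxy⟩

end Frames

section Filtration

/-- The subformulas of a formula, including the formula itself. -/
def BForm.subformulas : BForm → Finset BForm
  | .var n => {.var n}
  | .bot => {.bot}
  | .imp A B => insert (.imp A B) (subformulas A ∪ subformulas B)
  | .box A => insert (.box A) (subformulas A)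
  | .dbox A => insert (.dbox A) (subformulas A)

theorem BForm.mem_subformulas_self (A : BForm) : A ∈ A.subformulas := by
  cases A <;> simp [subformulas]

theorem BForm.subformulas_subset {A B : BForm} (h : B ∈ A.subformulas) :
    B.subformulas ⊆ A.subformulas := by
  induction A with grind [subformulas]

/-- Sets of formulas closed under immediate subformulas, through which models are filtered. -/
structure IsSubformulaClosed (Φ : Set BForm) : Prop where
  imp_left {A B : BForm} : imp A B ∈ Φ → A ∈ Φ
  imp_right {A B : BForm} : imp A B ∈ Φ → B ∈ Φ
  box {A : BForm} : box A ∈ Φ → A ∈ Φ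
  dbox {A : BForm} : dbox A ∈ Φ → A ∈ Φ

theorem BForm.isSubformulaClosed_subformulas (A : BForm) :
    IsSubformulaClosed (A.subformulas : Set BForm) where
  imp_left h := subformulas_subset h (by simp [subformulas, mem_subformulas_self])
  imp_right h := subformulas_subset h (by simp [subformulas, mem_subformulas_self])
  box h := subformulas_subset h (by simp [subformulas, mem_subformulas_self])
  dbox h := subformulas_subset h (by simp [subformulas, mem_subformulas_self])

/-- The formulas of `Φ` satisfied at a point; the filtration identifies points with the
same value. -/
def satisfiedIn (R RD : W → W → Prop) (θ : ℕ → Set W) (Φ : Set BForm) (x : W) : Set Φ :=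
  {B | ksat R RD θ x B}

variable {W V : Type} {R RD : W → W → Prop} {θ : ℕ → Set W} {g : W → V} {Φ : Set BForm}

theorem exists_ksat_of_map (hR : ∀ ⦃x y z⦄, R x y → R y z → R x z)
    (hg : ∀ x y, g x = g y → ∀ B ∈ Φ, (ksat R RD θ x B ↔ ksat R RD θ y B))
    {B : BForm} (hB : box B ∈ Φ) {x : W} (hx : ksat R RD θ x (box B)) {b : V}
    (hxb : Relation.Map R g g (g x) b) :
    ∃ y, g y = b ∧ ksat R RD θ y B ∧ ksat R RD θ y (box B) := by
  obtain ⟨u, v, huv, hu, rfl⟩ := hxb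
  have hu' : ksat R RD θ u (box B) := (hg u x hu _ hB).2 hx
  exact ⟨v, rfl, hu' v huv, fun z hvz => hu' z (hR huv hvz)⟩

theorem exists_ksat_of_transGen_map (hR : ∀ ⦃x y z⦄, R x y → R y z → R x z)
    (hg : ∀ x y, g x = g y → ∀ B ∈ Φ, (ksat R RD θ x B ↔ ksat R RD θ y B))
    {B : BForm} (hB : box B ∈ Φ) {x : W} (hx : ksat R RD θ x (box B)) {b : V}
    (hxb : TransGen (Relation.Map R g g) (g x) b) :
    ∃ y, g y = b ∧ ksat R RD θ y B ∧ ksat R RD θ y (box B) := by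
  induction hxb with
  | single h => exact exists_ksat_of_map hR hg hB hx h
  | tail _ h ih =>
    obtain ⟨y, rfl, -, hy⟩ := ih
    exact exists_ksat_of_map hR hg hB hy h

theorem ksat_filtration (hR : ∀ ⦃x y z⦄, R x y → R y z → R x z) (hΦ : IsSubformulaClosed Φ)
    (hg : ∀ x y, g x = g y → ∀ B ∈ Φ, (ksat R RD θ x B ↔ ksat R RD θ y B))
    {A : BForm} (hA : A ∈ Φ) (x : W) :
    ksat (TransGen (Relation.Map R g g)) (Relation.Map RD g g) (fun n => g '' θ n) (g x) A ↔
      ksat R RD θ x A := by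
  induction A generalizing x with
  | var n => exact ⟨fun ⟨y, hy, hyx⟩ => (hg y x hyx _ hA).1 hy, fun h => ⟨x, h, rfl⟩⟩
  | bot => rfl
  | imp A B ihA ihB => simp only [ksat, ihA (hΦ.imp_left hA), ihB (hΦ.imp_right hA)]
  | box B ih =>
    have ih := ih (hΦ.box hA)
    refine ⟨fun h y hxy => (ih y).1 (h _ (.single ⟨x, y, hxy, rfl, rfl⟩)), fun h b hxb => ?_⟩
    obtain ⟨y, rfl, hy, -⟩ := exists_ksat_of_transGen_map hR hg hA h hxb
    exact (ih y).2 hy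
  | dbox B ih =>
    have ih := ih (hΦ.dbox hA)
    refine ⟨fun h y hxy => (ih y).1 (h _ ⟨x, y, hxy, rfl, rfl⟩), ?_⟩
    rintro h _ ⟨u, v, huv, hu, rfl⟩
    exact (ih v).2 ((hg u x hu _ hA).2 h v huv)

theorem pairwise_map (hg : g.Surjective) (hRD : Pairwise RD) :
    Pairwise (Relation.Map RD g g) := by
  intro a b hab
  obtain ⟨x, rfl⟩ := hg a
  obtain ⟨y, rfl⟩ := hg b
  exact ⟨x, y, hRD (ne_of_apply_ne g hab), rfl, rfl⟩

namespace IsS4DFrame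

theorem filtration (hF : IsS4DFrame R RD) (hRD : Pairwise RD) (hg : g.Surjective) :
    IsS4DFrame (TransGen (Relation.Map R g g)) (Relation.Map RD g g) where
  refl := hg.forall.2 fun x => .single ⟨x, x, hF.refl x, rfl, rfl⟩
  trans _ _ _ := .trans
  symm := by
    rintro _ _ ⟨x, y, hxy, rfl, rfl⟩
    exact ⟨y, x, hF.symm hxy, rfl, rfl⟩
  ptrans _ _ _ _ _ hac := pairwise_map hg hRD hac
  inc a b _ := (eq_or_ne a b).symm.imp_left fun hab => pairwise_map hg hRD hab

theorem isDSFrame_filtration (hF : IsS4DFrame R RD) (hRD : Pairwise RD) (hDS : IsDSFrame R RD)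
    (hg : g.Surjective) :
    IsDSFrame (TransGen (Relation.Map R g g)) (Relation.Map RD g g) := by
  refine (hF.filtration hRD hg).isDSFrame_iff.2 (hg.forall.2 fun x => ?_)
  obtain ⟨y, hxyD, hxy⟩ := hF.isDSFrame_iff.1 hDS x
  exact ⟨g y, ⟨x, y, hxyD, rfl, rfl⟩, .single ⟨x, y, hxy, rfl, rfl⟩⟩

theorem map_of_map_of_map (hF : IsS4DFrame R RD) (hRD : Pairwise RD) (hT1 : IsT1Frame R RD)
    {a b c : V} (hab : Relation.Map RD g g a b) (hbc : Relation.Map R g g b c) :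
    Relation.Map RD g g a c := by
  obtain ⟨x, y, hxy, rfl, rfl⟩ := hab
  obtain ⟨u, v, huv, huy, rfl⟩ := hbc
  by_cases hxu : x = u
  · subst hxu
    rcases hF.inc huv with hxv | rfl
    · exact ⟨x, v, hxv, rfl, rfl⟩
    · exact ⟨x, y, hxy, rfl, huy.symm⟩
  · exact ⟨x, v, hF.isT1Frame_iff.1 hT1 (hRD hxu) huv, rfl, rfl⟩

theorem isT1Frame_filtration (hF : IsS4DFrame R RD) (hRD : Pairwise RD) (hT1 : IsT1Frame R RD)
    (hg : g.Surjective) :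
    IsT1Frame (TransGen (Relation.Map R g g)) (Relation.Map RD g g) := by
  refine (hF.filtration hRD hg).isT1Frame_iff.2 fun a b c hab hbc => ?_
  induction hbc with
  | single h => exact hF.map_of_map_of_map hRD hT1 hab h
  | tail _ h ih => exact hF.map_of_map_of_map hRD hT1 ih h

theorem kvalid_of_forall_finite_of_pairwise (hF : IsS4DFrame R RD) (hRD : Pairwise RD)
    (hDS : IsDSFrame R RD) (hT1 : IsT1Frame R RD) {A : BForm}
    (hA : ∀ (V : Type) (S SD : V → V → Prop), Finite V → IsS4DFrame S SD → IsDSFrame S SD →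
      IsT1Frame S SD → kvalid S SD A) :
    kvalid R RD A := by
  intro θ x
  let g := Set.rangeFactorization (satisfiedIn R RD θ A.subformulas)
  have hg : g.Surjective := Set.rangeFactorization_surjective
  have hg_ksat (x y : W) (hxy : g x = g y) :
      ∀ B ∈ (A.subformulas : Set BForm), (ksat R RD θ x B ↔ ksat R RD θ y B) :=
    fun B hB => Set.ext_iff.1 (congrArg Subtype.val hxy) ⟨B, hB⟩
  refine (ksat_filtration hF.trans A.isSubformulaClosed_subformulas hg_ksat
    A.mem_subformulas_self x).1 ?_
  exact hA _ _ _ inferInstance (hF.filtration hRD hg) (hF.isDSFrame_filtration hRD hDS hg)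
    (hF.isT1Frame_filtration hRD hT1 hg) _ _

theorem kvalid_of_forall_finite (hF : IsS4DFrame R RD) (hDS : IsDSFrame R RD)
    (hT1 : IsT1Frame R RD) {A : BForm}
    (hA : ∀ (V : Type) (S SD : V → V → Prop), Finite V → IsS4DFrame S SD → IsDSFrame S SD →
      IsT1Frame S SD → kvalid S SD A) :
    kvalid R RD A := by
  intro θ r
  have hclosedR ⦃x y : W⦄ (hx : ReflGen RD r x) (hxy : R x y) : ReflGen RD r y :=
    hF.reflGen_trans hx (hF.reflGen_of_rel hxy)
  have hclosedRD ⦃x y : W⦄ (hx : ReflGen RD r x) (hxy : RD x y) : ReflGen RD r y :=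
    hF.reflGen_trans hx (.single hxy)
  exact (ksat_subrel hclosedR hclosedRD ⟨r, .refl⟩).1
    ((hF.subrel _).kvalid_of_forall_finite_of_pairwise (hF.pairwise_subrel_reflGen r)
      (hDS.subrel hclosedR) (hT1.subrel _) hA _ _)

end IsS4DFrame

end Filtration

namespace Logic

section Derivability

/-- Local derivability from the assumptions `S` in the logic axiomatized by `Ax`: only modus
ponens may be applied to formulas that depend on `S`. -/
inductive Derives (Ax S : Set BForm) : BForm → Prop
  | logic {A : BForm} : Logic Ax A → Derives Ax S A
  | hyp {A : BForm} : A ∈ S → Derives Ax S A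
  | mp {A B : BForm} : Derives Ax S (imp A B) → Derives Ax S A → Derives Ax S B

variable {Ax S T : Set BForm} {A B : BForm}

theorem imp_self (A : BForm) : Logic Ax (imp A A) :=
  taut fun v => by simp [beval]

theorem imp_imp_self (A B : BForm) : Logic Ax (imp A (imp B A)) :=
  taut fun v => by simp only [beval]; grind

theorem imp_distrib (A B C : BForm) :
    Logic Ax (imp (imp A (imp B C)) (imp (imp A B) (imp A C))) :=
  taut fun v => by simp only [beval]; grind

theorem bot_imp (A : BForm) : Logic Ax (imp bot A) :=
  taut fun v => by simp [beval]

theorem neg_neg_imp (A : BForm) : Logic Ax (imp (neg (neg A)) A) :=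
  taut fun v => by simp [beval, neg]

namespace Derives

theorem imp_of_insert (h : Derives Ax (insert A S) B) : Derives Ax S (imp A B) := by
  induction h with
  | logic h => exact .mp (.logic (imp_imp_self _ _)) (.logic h)
  | hyp h =>
    rcases h with rfl | h
    · exact .logic (imp_self _)
    · exact .mp (.logic (imp_imp_self _ _)) (.hyp h)
  | mp _ _ ih₁ ih₂ => exact .mp (.mp (.logic (imp_distrib _ _ _)) ih₁) ih₂

theorem by_contra (h : Derives Ax (insert (neg A) S) bot) : Derives Ax S A :=
  .mp (.logic (neg_neg_imp A)) h.imp_of_insert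

theorem mono (hST : S ⊆ T) (h : Derives Ax S A) : Derives Ax T A := by
  induction h with
  | logic h => exact .logic h
  | hyp h => exact .hyp (hST h)
  | mp _ _ ih₁ ih₂ => exact .mp ih₁ ih₂

theorem exists_mem_of_sUnion {c : Set (Set BForm)} (hc : IsChain (· ⊆ ·) c) (hne : c.Nonempty)
    (h : Derives Ax (⋃₀ c) A) : ∃ S ∈ c, Derives Ax S A := by
  induction h with
  | logic h => exact hne.imp fun S hS => ⟨hS, .logic h⟩
  | hyp h => exact h.imp fun S hS => ⟨hS.1, .hyp hS.2⟩
  | mp _ _ ih₁ ih₂ =>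
    obtain ⟨S, hS, h₁⟩ := ih₁
    obtain ⟨T, hT, h₂⟩ := ih₂
    rcases hc.total hS hT with hST | hTS
    · exact ⟨T, hT, .mp (h₁.mono hST) h₂⟩
    · exact ⟨S, hS, .mp h₁ (h₂.mono hTS)⟩

theorem logic_of_empty (h : Derives Ax ∅ A) : Logic Ax A := by
  induction h with
  | logic h => exact h
  | hyp h => exact h.elim
  | mp _ _ ih₁ ih₂ => exact .mp ih₁ ih₂

end Derives

end Derivability

/-- Maximal consistent sets of the logic axiomatized by `Ax`, the points of its canonical model.
Maximality is expressed as negation completeness. -/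
structure MCS (Ax : Set BForm) where
  carrier : Set BForm
  consistent : ¬ Derives Ax carrier bot
  complete : ∀ A, A ∈ carrier ∨ neg A ∈ carrier

variable {Ax : Set BForm}

instance : SetLike (MCS Ax) BForm where
  coe := MCS.carrier
  coe_injective x y h := by cases x; cases y; congr

theorem exists_mcs_superset {S : Set BForm} (hS : ¬ Derives Ax S bot) :
    ∃ x : MCS Ax, S ⊆ x := by
  obtain ⟨T, hST, hT⟩ := zorn_subset_nonempty {T | ¬ Derives Ax T bot}
    (fun c hcons hc hne => ⟨⋃₀ c, fun h => by
      obtain ⟨T, hT, hbot⟩ := h.exists_mem_of_sUnion hc hne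
      exact hcons hT hbot, fun _ => Set.subset_sUnion_of_mem⟩) S hS
  have derives_bot {A : BForm} (hA : A ∉ T) : Derives Ax (insert A T) bot := by
    by_contra h
    exact hA (hT.le_of_ge h (Set.subset_insert A T) (Set.mem_insert A T))
  refine ⟨⟨T, hT.prop, fun A => ?_⟩, hST⟩
  by_contra! hA
  exact hT.prop (.mp (derives_bot hA.2).imp_of_insert (derives_bot hA.1).imp_of_insert)

namespace MCS

variable {x y : MCS Ax} {A B : BForm}

theorem mem_of_derives (h : Derives Ax x A) : A ∈ x :=
  (x.complete A).resolve_right fun hA => x.consistent (.mp (.hyp hA) h)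

theorem mem_of_logic (h : Logic Ax A) : A ∈ x := mem_of_derives (.logic h)

theorem mem_mp (h : imp A B ∈ x) (hA : A ∈ x) : B ∈ x :=
  mem_of_derives (.mp (.hyp h) (.hyp hA))

theorem mem_of_logic_imp (h : Logic Ax (imp A B)) (hA : A ∈ x) : B ∈ x :=
  mem_mp (mem_of_logic h) hA

theorem bot_notMem : bot ∉ x := fun h => x.consistent (.hyp h)

theorem mem_neg : neg A ∈ x ↔ A ∉ x :=
  ⟨fun h hA => bot_notMem (mem_mp h hA), (x.complete A).resolve_left⟩

theorem mem_imp : imp A B ∈ x ↔ (A ∈ x → B ∈ x) := by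
  refine ⟨mem_mp, fun h => mem_of_derives (Derives.imp_of_insert ?_)⟩
  by_cases hA : A ∈ x
  · exact .hyp (Set.mem_insert_of_mem A (h hA))
  · exact .mp (.logic (bot_imp B))
      (.mp (.hyp (Set.mem_insert_of_mem A (mem_neg.2 hA))) (.hyp (Set.mem_insert A x)))

theorem mem_conj : conj A B ∈ x ↔ A ∈ x ∧ B ∈ x := by
  simp only [conj, mem_neg, mem_imp, Classical.not_imp, not_not]

theorem exists_mem_notMem (h : x ≠ y) : ∃ A ∈ x, A ∉ y := by
  by_contra! hxy
  refine h (SetLike.ext fun A => ⟨hxy A, fun hA => ?_⟩)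
  by_contra hAx
  exact mem_neg.1 (hxy _ (mem_neg.2 hAx)) hA

end MCS

theorem derives_iff_forall_mcs {S : Set BForm} {A : BForm} :
    Derives Ax S A ↔ ∀ x : MCS Ax, S ⊆ x → A ∈ x := by
  refine ⟨fun h x hS => MCS.mem_of_derives (h.mono hS), fun h => ?_⟩
  by_contra hA
  obtain ⟨x, hx⟩ := exists_mcs_superset (mt Derives.by_contra hA)
  exact MCS.mem_neg.1 (hx (Set.mem_insert _ _)) (h x ((Set.subset_insert _ _).trans hx))

theorem Derives.exists_of_union {S T : Set BForm} {A : BForm} (h : Derives Ax (S ∪ T) A) :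
    ∃ C, Derives Ax T C ∧ Derives Ax S (imp C A) := by
  induction h with
  | @logic A h => exact ⟨A, .logic h, .logic (imp_self A)⟩
  | @hyp A h =>
    rcases h with hS | hT
    · exact ⟨imp A A, .logic (imp_self A), .mp (.logic (imp_imp_self _ _)) (.hyp hS)⟩
    · exact ⟨A, .hyp hT, .logic (imp_self A)⟩
  | @mp A B _ _ ih₁ ih₂ =>
    obtain ⟨C, hC, hCAB⟩ := ih₁
    obtain ⟨D, hD, hDA⟩ := ih₂
    have hCD (x : MCS Ax) (hx : T ⊆ x) : conj C D ∈ x :=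
      MCS.mem_conj.2 ⟨MCS.mem_of_derives (hC.mono hx), MCS.mem_of_derives (hD.mono hx)⟩
    have hCDB (x : MCS Ax) (hx : S ⊆ x) : imp (conj C D) B ∈ x := by
      have hxC : imp C (imp A B) ∈ x := MCS.mem_of_derives (hCAB.mono hx)
      have hxD : imp D A ∈ x := MCS.mem_of_derives (hDA.mono hx)
      simp only [MCS.mem_imp, MCS.mem_conj] at hxC hxD ⊢
      exact fun h => hxC h.1 (hxD h.2)
    exact ⟨conj C D, derives_iff_forall_mcs.2 hCD, derives_iff_forall_mcs.2 hCDB⟩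

/-- An operation `m` on formulas is a normal modality of the logic axiomatized by `Ax`; this
treats `□` and `[≠]` uniformly. -/
structure IsNormal (Ax : Set BForm) (m : BForm → BForm) : Prop where
  distrib (A B : BForm) : Logic Ax (imp (m (imp A B)) (imp (m A) (m B)))
  nec {A : BForm} : Logic Ax A → Logic Ax (m A)

theorem isNormal_box : IsNormal Ax box where
  distrib A B := .subst (fun | 0 => A | _ => B) axKBox
  nec := necBox

theorem isNormal_dbox : IsNormal Ax dbox where
  distrib A B := .subst (fun | 0 => A | _ => B) axKD
  nec := necD

/-- The relation of the canonical frame that interprets the modality `m`. -/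
def canonicalRel (Ax : Set BForm) (m : BForm → BForm) (x y : MCS Ax) : Prop :=
  ∀ ⦃A⦄, m A ∈ x → A ∈ y

namespace IsNormal

variable {m : BForm → BForm} {x : MCS Ax} {A : BForm}

theorem mem_of_derives (hm : IsNormal Ax m) (h : Derives Ax {B | m B ∈ x} A) : m A ∈ x := by
  induction h with
  | logic h => exact MCS.mem_of_logic (hm.nec h)
  | hyp h => exact h
  | mp _ _ ih₁ ih₂ => exact MCS.mem_mp (MCS.mem_of_logic_imp (hm.distrib _ _) ih₁) ih₂

theorem mem_iff (hm : IsNormal Ax m) : m A ∈ x ↔ ∀ y, canonicalRel Ax m x y → A ∈ y :=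
  ⟨fun h _ hxy => hxy h, fun h => hm.mem_of_derives (derives_iff_forall_mcs.2 h)⟩

theorem mem_dual_iff (hm : IsNormal Ax m) :
    neg (m (neg A)) ∈ x ↔ ∃ y, canonicalRel Ax m x y ∧ A ∈ y := by
  simp only [MCS.mem_neg, hm.mem_iff, not_forall, not_not, exists_prop]

end IsNormal

section CanonicalFrame

variable {x y z : MCS Ax} {A : BForm}

theorem ksat_canonical_iff_mem :
    ksat (canonicalRel Ax box) (canonicalRel Ax dbox) (fun n => {x | var n ∈ x}) x A ↔ A ∈ x := by
  induction A generalizing x with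
  | var n => rfl
  | bot => exact iff_of_false id MCS.bot_notMem
  | imp A B ihA ihB => simp only [ksat, ihA, ihB, MCS.mem_imp]
  | box A ih => simp only [ksat, ih, isNormal_box.mem_iff]
  | dbox A ih => simp only [ksat, ih, isNormal_dbox.mem_iff]

theorem of_kvalid_canonical (h : kvalid (canonicalRel Ax box) (canonicalRel Ax dbox) A) :
    Logic Ax A :=
  (derives_iff_forall_mcs.2 fun _ _ => ksat_canonical_iff_mem.1 (h _ _)).logic_of_empty

theorem canonicalRel_dbox_symm (hxy : canonicalRel Ax dbox x y) : canonicalRel Ax dbox y x := by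
  intro B hB
  by_contra hBx
  have hdbox : dbox (ddia (neg B)) ∈ x :=
    MCS.mem_of_logic_imp (.subst (fun _ => neg B) axBD) (MCS.mem_neg.2 hBx)
  obtain ⟨z, hyz, hz⟩ := isNormal_dbox.mem_dual_iff.1 (hxy hdbox)
  exact MCS.mem_neg.1 hz (hyz hB)

/-- For `C ∈ y` with `C ∉ x`, take `C → B`, which is true at `x` and equivalent to `B` at `y`. -/
theorem exists_mem_and_dbox_mem (hne : x ≠ y) {B : BForm} (hB : dbox B ∈ x) :
    ∃ E ∈ x, dbox E ∈ x ∧ (E ∈ y → B ∈ y) := by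
  obtain ⟨C, hCy, hCx⟩ := MCS.exists_mem_notMem hne.symm
  refine ⟨imp C B, MCS.mem_imp.2 fun hC => absurd hC hCx, ?_, fun h => MCS.mem_mp h hCy⟩
  exact isNormal_dbox.mem_iff.2 fun z hxz => MCS.mem_imp.2 fun _ => hxz hB

theorem canonicalRel_dbox_pseudoTrans (hxy : canonicalRel Ax dbox x y)
    (hyz : canonicalRel Ax dbox y z) (hne : x ≠ z) : canonicalRel Ax dbox x z := by
  intro B hB
  obtain ⟨E, hE, hdE, hEB⟩ := exists_mem_and_dbox_mem hne hB
  have hddE : dbox (dbox E) ∈ x :=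
    MCS.mem_of_logic_imp (.subst (fun _ => E) ax4mD) (MCS.mem_conj.2 ⟨hE, hdE⟩)
  exact hEB (hyz (hxy hddE))

theorem canonicalRel_dbox_of_box (hxy : canonicalRel Ax box x y) (hne : x ≠ y) :
    canonicalRel Ax dbox x y := by
  intro B hB
  obtain ⟨E, hE, hdE, hEB⟩ := exists_mem_and_dbox_mem hne hB
  have hbE : box E ∈ x :=
    MCS.mem_of_logic_imp (.subst (fun _ => E) axDBox) (MCS.mem_conj.2 ⟨hdE, hE⟩)
  exact hEB (hxy hbE)

theorem isS4DFrame_canonical (Ax : Set BForm) :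
    IsS4DFrame (canonicalRel Ax box) (canonicalRel Ax dbox) where
  refl _ B hB := MCS.mem_of_logic_imp (.subst (fun _ => B) axTBox) hB
  trans _ _ _ hxy hyz B hB :=
    hyz (hxy (MCS.mem_of_logic_imp (.subst (fun _ => B) ax4Box) hB))
  symm _ _ := canonicalRel_dbox_symm
  ptrans _ _ _ := canonicalRel_dbox_pseudoTrans
  inc x y hxy := (eq_or_ne x y).symm.imp_left (canonicalRel_dbox_of_box hxy)

theorem isT1Frame_canonical (hAx : at1Ax ∈ Ax) :
    IsT1Frame (canonicalRel Ax box) (canonicalRel Ax dbox) :=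
  (isS4DFrame_canonical Ax).isT1Frame_iff.2 fun _ _ _ hxy hyz B hB =>
    hyz (hxy (MCS.mem_of_logic_imp (.subst (fun _ => B) (.extra hAx)) hB))

theorem isDSFrame_canonical (hAx : dsAx ∈ Ax) :
    IsDSFrame (canonicalRel Ax box) (canonicalRel Ax dbox) := by
  refine (isS4DFrame_canonical Ax).isDSFrame_iff.2 fun x => ?_
  have hcons : ¬ Derives Ax ({B | dbox B ∈ x} ∪ {B | box B ∈ x}) bot := by
    intro h
    obtain ⟨C, hC, hnC⟩ := h.exists_of_union
    have hbox : box C ∈ x := isNormal_box.mem_of_derives hC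
    have hdbox : dbox (neg C) ∈ x := isNormal_dbox.mem_of_derives hnC
    have hdia : dia (neg C) ∈ x :=
      MCS.mem_of_logic_imp (.subst (fun _ => neg C) (.extra hAx)) hdbox
    obtain ⟨y, hxy, hy⟩ := isNormal_box.mem_dual_iff.1 hdia
    exact MCS.mem_neg.1 hy (hxy hbox)
  obtain ⟨y, hy⟩ := exists_mcs_superset hcons
  exact ⟨y, fun _ hB => hy (.inl hB), fun _ hB => hy (.inr hB)⟩

end CanonicalFrame

end Logic

/-- finite model property of S4DT1S: `A ∈ S4DT1S` iff `A` is valid in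
every finite S4D-frame that is both a DS-frame and a T₁-frame. -/
theorem s4dt1s_fmp (A : BForm) :
    S4DT1S A ↔ ∀ (W : Type) (R RD : W → W → Prop), Finite W → IsS4DFrame R RD →
      IsDSFrame R RD → IsT1Frame R RD → kvalid R RD A := by
  constructor
  · intro hA W R RD _ hF hDS hT1
    refine hF.kvalid_of_logic ?_ hA
    rintro _ (rfl | rfl)
    · exact hF.kvalid_dsAx hDS
    · exact hF.kvalid_at1Ax hT1
  · intro hA
    exact Logic.of_kvalid_canonical <| (Logic.isS4DFrame_canonical _).kvalid_of_forall_finite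
      (Logic.isDSFrame_canonical (Set.mem_insert _ _))
      (Logic.isT1Frame_canonical (Set.mem_insert_of_mem _ (Set.mem_singleton _))) hA
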